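/- arXiv:2207.14337 — 6 statements merged into one kernel-verified Lean document; each statement's English description precedes it below -/
import Mathlib

section
/- Let p be a prime number, let a ≥ 1 and h ≥ 1 be integers, and let A be a commutative ring in which p^a = 0. Let E ∈ A[X] be a monic polynomial of degree e ≥ 1 all of whose coefficients in degrees strictly less than e lie in the ideal pA (so that E ≡ X^e modulo p). Then E^h divides X^{e(a+h−1)} in A[X]. -/
/-!
Write `X ^ e = E + (X ^ e - E)`. The difference `X ^ e - E` is divisible by `p`, so its `a`-th power
vanishes. Expanding `(E + (X ^ e - E)) ^ (a + h - 1)` by the binomial theorem, every term that is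
not divisible by `E ^ h` contains the factor `(X ^ e - E) ^ a = 0`; this last step is
`Commute.pow_dvd_add_pow_of_pow_eq_zero_right`.
-/

/-- Let `p` be a prime, `a ≥ 1` and `h ≥ 1` integers, and `A` a commutative ring in which
`p ^ a = 0`.  Let `E ∈ A[X]` be a monic polynomial of degree `e ≥ 1` all of whose coefficients
in degrees strictly less than `e` lie in the ideal `pA`.  Then `E ^ h` divides
`X ^ (e * (a + h - 1))` in `A[X]`. -/
theorem eisenstein_pow_dvd_X_pow
    (p : ℕ) (hp : p.Prime) (a h : ℕ) (ha : 1 ≤ a) (hh : 1 ≤ h)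
    (A : Type*) [CommRing A] (hpa : (p : A) ^ a = 0)
    (E : Polynomial A) (hE : E.Monic) (e : ℕ) (he : 1 ≤ e)
    (hdeg : E.natDegree = e)
    (hcoeff : ∀ i < e, E.coeff i ∈ Ideal.span ({(p : A)} : Set A)) :
    E ^ h ∣ (Polynomial.X : Polynomial A) ^ (e * (a + h - 1)) := by
  -- `E` and `X ^ e` agree modulo `p`: both have leading coefficient `1` in degree `e`.
  have hdvd : Polynomial.C (p : A) ∣ Polynomial.X ^ e - E := by
    rw [Polynomial.C_dvd_iff_dvd_coeff]
    intro i
    rw [Polynomial.coeff_sub, Polynomial.coeff_X_pow]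
    rcases lt_trichotomy i e with hi | rfl | hi
    · rw [if_neg hi.ne, zero_sub, dvd_neg]
      exact Ideal.mem_span_singleton.mp (hcoeff i hi)
    · have h1 : E.coeff i = 1 := by rw [← hdeg]; exact hE.coeff_natDegree
      simp [h1]
    · rw [if_neg hi.ne', Polynomial.coeff_eq_zero_of_natDegree_lt (hdeg ▸ hi)]
      simp
  have hnil : (Polynomial.X ^ e - E) ^ a = 0 := by
    have := pow_dvd_pow_of_dvd hdvd a
    rwa [← Polynomial.C_pow, hpa, Polynomial.C_0, zero_dvd_iff] at this
  -- In the expansion of `(E + (X ^ e - E)) ^ (a + h - 1)`, each term has at least `h` factors `E`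
  -- or at least `a` factors `X ^ e - E`.
  have key := (Commute.all E (Polynomial.X ^ e - E)).pow_dvd_add_pow_of_pow_eq_zero_right
    (m := h) (p := a + h - 1) (by omega) hnil
  rwa [add_sub_cancel, ← pow_mul] at key
end

section
/- Let p be a prime number and let A be a commutative ring which is p-adically complete, i.e. the natural map A → lim_a A/p^a A is an isomorphism. Let E ∈ A[X] be a monic polynomial of degree e ≥ 1 all of whose coefficients in degrees strictly less than e lie in pA. Then E is a nonzerodivisor in the power series ring A[[X]]: if f ∈ A[[X]] satisfies E·f = 0, then f = 0. -/
/-!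
`E` is a distinguished polynomial for the ideal `pA`, hence a Weierstrass divisor in `A⟦X⟧`: its
reduction modulo `p` is `X ^ e`, whose order `e` is a degree in which `E` has unit coefficient.
As `A` is `p`-adically separated, Weierstrass division by `E` has unique quotient and remainder
(`PowerSeries.IsWeierstrassDivisorAt.eq_zero_of_mul_eq`), and `E * f = 0` is a division of `0`
with quotient `f` and remainder `0`, so `f = 0`.
-/


/-- Let `p` be a prime and let `A` be a commutative ring which is `p`-adically complete.
Let `E ∈ A[X]` be a monic polynomial of degree `e ≥ 1` all of whose coefficients in degrees
strictly less than `e` lie in `pA`.  Then (the image of) `E` is a nonzerodivisor in the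
power series ring `A⟦X⟧`. -/
theorem eisenstein_nonZeroDivisor_powerSeries
    (p : ℕ) (hp : p.Prime) (A : Type*) [CommRing A]
    (hA : IsAdicComplete (Ideal.span ({(p : A)} : Set A)) A)
    (E : Polynomial A) (hE : E.Monic) (e : ℕ) (he : 1 ≤ e)
    (hdeg : E.natDegree = e)
    (hcoeff : ∀ i < e, E.coeff i ∈ Ideal.span ({(p : A)} : Set A)) :
    ∀ f : PowerSeries A, (E : PowerSeries A) * f = 0 → f = 0 := by
  intro f hf
  have hdist : E.IsDistinguishedAt (Ideal.span ({(p : A)} : Set A)) :=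
    { mem := fun hn => hcoeff _ (hdeg ▸ hn)
      monic := hE }
  have hdiv : PowerSeries.IsWeierstrassDivisorAt (E : PowerSeries A)
      (Ideal.span ({(p : A)} : Set A)) := hdist.isWeierstrassDivisorAt'
  -- The remainder `r = 0` has degree `⊥`, so it lies below any bound.
  exact (hdiv.eq_zero_of_mul_eq (q := f) (r := 0)
    (by rw [Polynomial.degree_zero]; exact WithBot.bot_lt_coe _)
    (by rw [hf, Polynomial.coe_zero])).1
end

section
/- Let S be a commutative ring, let E ∈ S, and let f : P → M be an S-linear map of S-modules such that M is finitely generated over S and such that P has no nonzero E-power-torsion (that is, if E^n·x = 0 for some n ≥ 0 then x = 0). Then the induced map P[1/E] → M[1/E], obtained by localizing at the multiplicative set of powers of E, is an isomorphism if and only if f is injective and the cokernel of f is killed by E^h for some h ≥ 0. -/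
/-!
Since `P` has no `E`-power-torsion, `P` embeds in `P[1/E]`, so injectivity of the localized map
restricts to injectivity of `f`; the converse is exactness of localization. Surjectivity of the
localized map says that every `m : M` has some `E ^ n • m` in the range of `f`. When `M` is finitely
generated, the largest exponent needed on a finite generating set works for all of `M`, because
multiplication by a power of `E` is linear.
-/

/-- If each element of a finitely generated module is carried into `N` by some power of `E`,
then a single power of `E` carries the whole module into `N`. -/
lemma exists_uniform_pow_smul_mem {S M : Type*} [CommRing S] [AddCommGroup M] [Module S M]
    [Module.Finite S M] (E : S) (N : Submodule S M) (hN : ∀ m : M, ∃ n : ℕ, E ^ n • m ∈ N) :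
    ∃ h : ℕ, ∀ m : M, E ^ h • m ∈ N := by
  obtain ⟨s, hs⟩ := Module.Finite.fg_top (R := S) (M := M)
  choose n hn using hN
  refine ⟨s.sup n, fun m => ?_⟩
  have hle : Submodule.span S (s : Set M) ≤ N.comap (LinearMap.lsmul S M (E ^ s.sup n)) := by
    refine Submodule.span_le.2 fun x hx => ?_
    have hx' : n x ≤ s.sup n := Finset.le_sup hx
    change E ^ s.sup n • x ∈ N
    rw [← Nat.sub_add_cancel hx', pow_add, mul_smul]
    exact N.smul_mem _ (hn x)
  rw [hs] at hle
  exact hle (Submodule.mem_top (x := m))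

/-- Let `S` be a commutative ring, `E ∈ S`, and `f : P → M` an `S`-linear map with `M`
finitely generated over `S` and `P` having no nonzero `E`-power-torsion.  Then the induced
map `P[1/E] → M[1/E]` is an isomorphism if and only if `f` is injective and the cokernel of
`f` is killed by `E ^ h` for some `h ≥ 0`. -/
theorem localizedMap_bijective_iff_injective_and_cokernel_killed
    (S : Type*) [CommRing S] (E : S)
    (P M : Type*) [AddCommGroup P] [Module S P] [AddCommGroup M] [Module S M]
    [Module.Finite S M]
    (f : P →ₗ[S] M)
    (htf : ∀ (x : P) (n : ℕ), E ^ n • x = 0 → x = 0) :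
    Function.Bijective (LocalizedModule.map (Submonoid.powers E) f) ↔
      (Function.Injective f ∧ ∃ h : ℕ, ∀ m : M, E ^ h • m ∈ LinearMap.range f) := by
  constructor
  · rintro ⟨hinj, hsurj⟩
    constructor
    · rw [injective_iff_map_eq_zero]
      intro x hx
      have h0 : LocalizedModule.mk x (1 : Submonoid.powers E) = 0 := by
        apply hinj
        rw [LocalizedModule.map_mk, hx, map_zero, LocalizedModule.zero_mk]
      rw [← LocalizedModule.zero_mk 1, LocalizedModule.mk_eq] at h0
      obtain ⟨⟨_, n, rfl⟩, hu⟩ := h0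
      exact htf x n (by simpa [Submonoid.smul_def] using hu)
    · refine exists_uniform_pow_smul_mem E _ fun m => ?_
      obtain ⟨y, hy⟩ := hsurj (LocalizedModule.mk m 1)
      induction y using LocalizedModule.induction_on with
      | h x t =>
        obtain ⟨_, k, rfl⟩ := t
        rw [LocalizedModule.map_mk, LocalizedModule.mk_eq] at hy
        obtain ⟨⟨_, n, rfl⟩, hu⟩ := hy
        refine ⟨n + k, E ^ n • x, ?_⟩
        simpa [Submonoid.smul_def, pow_add, mul_smul] using hu
  · rintro ⟨hinj, h, hh⟩
    refine ⟨LocalizedModule.map_injective _ f hinj, fun y => ?_⟩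
    induction y using LocalizedModule.induction_on with
    | h m t =>
      obtain ⟨x, hx⟩ := hh m
      -- With `f x = E ^ h • m`, a preimage of `m / t` is `x / (E ^ h * t)`.
      refine ⟨LocalizedModule.mk x (⟨E ^ h, h, rfl⟩ * t), ?_⟩
      rw [LocalizedModule.map_mk, hx]
      exact LocalizedModule.mk_cancel_common_left (⟨E ^ h, h, rfl⟩ : Submonoid.powers E) t m
end

section
/- Let B be a commutative ring and let M be a finitely generated projective module over the power series ring B[[X]]. Then M is X-adically complete: the natural map M → lim_n M/X^n·M is an isomorphism. -/
/-!
A finitely generated projective module `M` over `R` has a finite dual basis: elements `m i` and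
functionals `φ i` with `x = ∑ i, φ i x • m i`. Each `φ i` maps `I ^ n M` into `I ^ n`, and
`∑ i, c i • m i` lies in `I ^ n M` as soon as all `c i` lie in `I ^ n`. So both separatedness and
convergence of Cauchy sequences in `M` can be checked on coordinates in `R`, and `M` is
`I`-adically complete whenever `R` is (`isAdicComplete_of_finite_projective`). The theorem is the
case `R = B⟦X⟧`, `I = (X)`, as `B⟦X⟧` is `X`-adically complete.
-/

/-- Existence of a finite dual basis, obtained by splitting a surjection `Rᵏ → M`. -/
theorem exists_finite_dual_basis (R M : Type*) [CommRing R] [AddCommGroup M] [Module R M]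
    [Module.Finite R M] [Module.Projective R M] :
    ∃ (k : ℕ) (m : Fin k → M) (φ : Fin k → M →ₗ[R] R), ∀ x, ∑ i, φ i x • m i = x := by
  obtain ⟨k, p, hp⟩ := Module.Finite.exists_fin' R M
  obtain ⟨s, hs⟩ := Module.projective_lifting_property p LinearMap.id hp
  refine ⟨k, fun i => p (Pi.single i 1), fun i => LinearMap.proj i ∘ₗ s, fun x => ?_⟩
  calc ∑ i, (s x i) • p (Pi.single i 1) = p (s x) := by
        rw [pi_eq_sum_univ' (s x), map_sum]
        simp [Pi.single_apply, ← map_smul, ← Pi.single_smul]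
    _ = x := LinearMap.congr_fun hs x

theorem apply_mem_of_mem_smul_top {R M : Type*} [CommRing R] [AddCommGroup M] [Module R M]
    (J : Ideal R) (φ : M →ₗ[R] R) {x : M} (hx : x ∈ (J • ⊤ : Submodule R M)) :
    φ x ∈ (J • ⊤ : Submodule R R) :=
  Submodule.smul_top_le_comap_smul_top J φ hx

theorem isAdicComplete_of_finite_projective {R M : Type*} [CommRing R] [AddCommGroup M]
    [Module R M] [Module.Finite R M] [Module.Projective R M] (I : Ideal R) [IsAdicComplete I R] :
    IsAdicComplete I M := by
  obtain ⟨k, m, φ, h⟩ := exists_finite_dual_basis R M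
  refine { haus' := fun x hx => ?_, prec' := fun f hf => ?_ }
  · have hφ : ∀ i, φ i x = 0 := fun i => IsHausdorff.haus' (I := I) _ fun n => by
      have := apply_mem_of_mem_smul_top _ (φ i) (SModEq.zero.1 (hx n))
      exact SModEq.zero.2 this
    rw [← h x]
    simp [hφ]
  · have hL : ∀ i, ∃ L : R, ∀ n, φ i (f n) ≡ L [SMOD (I ^ n • ⊤ : Submodule R R)] := fun i =>
      IsPrecomplete.prec' (fun n => φ i (f n)) fun hab => by
        have := apply_mem_of_mem_smul_top _ (φ i) (SModEq.sub_mem.1 (hf hab))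
        rw [map_sub] at this
        exact SModEq.sub_mem.2 this
    choose L hL using hL
    refine ⟨∑ i, L i • m i, fun n => ?_⟩
    rw [SModEq.sub_mem]
    nth_rewrite 1 [← h (f n)]
    rw [← Finset.sum_sub_distrib]
    refine Submodule.sum_mem _ fun i _ => ?_
    rw [← sub_smul]
    refine Submodule.smul_mem_smul ?_ Submodule.mem_top
    simpa using SModEq.sub_mem.1 (hL i n)


/-- Let `B` be a commutative ring and `M` a finitely generated projective module over the
power series ring `B⟦X⟧`.  Then `M` is `X`-adically complete. -/
theorem finite_projective_powerSeries_module_isAdicComplete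
    (B : Type*) [CommRing B]
    (M : Type*) [AddCommGroup M] [Module (PowerSeries B) M]
    [Module.Finite (PowerSeries B) M] [Module.Projective (PowerSeries B) M] :
    IsAdicComplete (Ideal.span ({(PowerSeries.X : PowerSeries B)} : Set (PowerSeries B))) M :=
  isAdicComplete_of_finite_projective _
end

section
/- Let G be a finite cyclic group, let χ ∈ G be a generator, let η, η′ ∈ G, and let m, m′ ≥ 0 be integers. Then the multiset {η·χ^i : 0 ≤ i < m} + {η′·χ^j : 0 ≤ j < m′} (the sum of multisets, counted with multiplicities) contains every element of G with one and the same multiplicity if and only if the multiset {η·χ^m, η′·χ^{m′}} is equal to the multiset {η, η′}. -/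
/-!
Write `S` for the sum of the two strings `η, ηχ, …, ηχ^(m-1)` and `η', η'χ, …, η'χ^(m'-1)`.
Since `χ` generates the finite group `G`, all elements have the same multiplicity in `S` exactly
when `S` is invariant under translation by `χ` (`uniform_count_iff_map_mul_eq`). Translating a
string by `χ` removes its first element and appends the next one (`map_mul_string_add`), so
`χS + {η, η'} = S + {ηχ^m, η'χ^m'}`. By cancellation, `χS = S` if and only if the two pairs agree.
-/

/-- Telescoping: translating `a, aχ, …, aχ^(n-1)` by `χ` trades `a` for `aχ^n`. -/
theorem map_mul_string_add {G : Type*} [CommGroup G] (χ a : G) (n : ℕ) :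
    ((Multiset.range n).map (fun i => a * χ ^ i)).map (χ * ·) + {a} =
      (Multiset.range n).map (fun i => a * χ ^ i) + {a * χ ^ n} := by
  induction n with
  | zero => simp
  | succ n ih =>
    have h : χ * (a * χ ^ n) = a * χ ^ (n + 1) := by rw [pow_succ]; ac_rfl
    simp only [Multiset.range_succ, Multiset.map_cons, Multiset.cons_add, ih, h]
    simp only [← Multiset.singleton_add]
    ac_rfl

theorem uniform_count_iff_map_mul_eq {G : Type*} [CommGroup G] [Finite G] [DecidableEq G]
    (χ : G) (hχ : ∀ g : G, g ∈ Subgroup.zpowers χ) (S : Multiset G) :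
    (∃ c : ℕ, ∀ g : G, S.count g = c) ↔ S.map (χ * ·) = S := by
  have key (g : G) : (S.map (χ * ·)).count (χ * g) = S.count g :=
    Multiset.count_map_eq_count' _ S (mul_right_injective χ) g
  constructor
  · rintro ⟨c, hc⟩
    ext g
    rw [← mul_inv_cancel_left χ g, key, hc, hc]
  · intro h
    rw [h] at key
    refine ⟨S.count 1, fun g => ?_⟩
    -- As `G` is finite, natural powers of `χ` already exhaust it.
    obtain ⟨k, rfl⟩ := (mem_powers_iff_mem_zpowers.2 (hχ g) : g ∈ Submonoid.powers χ)
    induction k with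
    | zero => simp
    | succ k ih => simpa [pow_succ', key] using ih

/-- Let `G` be a finite cyclic (hence commutative) group with generator `χ`, let `η, η' ∈ G`,
and let `m, m' ≥ 0`.  Then the multiset `{η·χ^i : 0 ≤ i < m} + {η'·χ^j : 0 ≤ j < m'}` contains
every element of `G` with one and the same multiplicity if and only if the multiset
`{η·χ^m, η'·χ^{m'}}` equals the multiset `{η, η'}`. -/
theorem multiset_uniform_count_iff
    (G : Type*) [CommGroup G] [Fintype G] [DecidableEq G]
    (χ : G) (hχ : ∀ g : G, g ∈ Subgroup.zpowers χ)
    (η η' : G) (m m' : ℕ) :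
    (∃ c : ℕ, ∀ g : G,
        ((Multiset.range m).map (fun i => η * χ ^ i) +
          (Multiset.range m').map (fun j => η' * χ ^ j)).count g = c) ↔
      ({η * χ ^ m, η' * χ ^ m'} : Multiset G) = ({η, η'} : Multiset G) := by
  rw [uniform_count_iff_map_mul_eq χ hχ, Multiset.map_add]
  have h₁ := map_mul_string_add χ η m
  have h₂ := map_mul_string_add χ η' m'
  set A := (Multiset.range m).map (fun i => η * χ ^ i)
  set B := (Multiset.range m').map (fun j => η' * χ ^ j)
  have pair (a b : G) : ({a, b} : Multiset G) = {a} + {b} := rfl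
  have h : A.map (χ * ·) + B.map (χ * ·) + {η, η'} = A + B + {η * χ ^ m, η' * χ ^ m'} := by
    rw [pair, pair, add_add_add_comm, h₁, h₂, add_add_add_comm]
  constructor
  · intro e
    rw [e] at h
    exact (add_left_cancel h).symm
  · intro e
    rw [e] at h
    exact add_right_cancel h
end

section
/- Let R be a commutative ring, let G be a finite group whose order is invertible in R, and let S be a commutative R-algebra equipped with an action of G by R-algebra automorphisms such that the structure map R → S is injective and identifies R with the subring S^G of G-invariants. Then for every R-module N, the natural map N → S ⊗_R N sending n to 1 ⊗ n is injective, and its image is exactly the set of elements of S ⊗_R N fixed by the action of G through the first tensor factor (where g acts by g·(s ⊗ n) = g(s) ⊗ n). -/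
/-!
The normalised trace `T = |G|⁻¹ ∑ g, ρ g` on `S` takes values in the invariants, which are `R`, so it
factors as `T = ι ∘ e`, where `ι : R → S` is the structure map and `e : S → R` is an `R`-linear
retraction of `ι` (`exists_retraction_factoring_average`). Tensoring with `N` preserves both facts:
`e ⊗ N` is a retraction of `N → S ⊗ N`, which is therefore injective, and a fixed element `x`
satisfies `x = (T ⊗ N) x = (ι ⊗ N) ((e ⊗ N) x)`, which lies in the image of `N`.
-/


open TensorProduct

/-- The average over `G`, corestricted to the invariants, is a linear retraction `e` of `R → S`. -/
theorem exists_retraction_factoring_average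
    {R S G : Type*} [CommRing R] [CommRing S] [Algebra R S] [Group G] [Fintype G]
    {u : R} (hu : u * (Fintype.card G : R) = 1)
    (ρ : G →* (S ≃ₐ[R] S))
    (hinj : Function.Injective (algebraMap R S))
    (hinv : ∀ s : S, (∀ g : G, ρ g s = s) → s ∈ (algebraMap R S).range) :
    ∃ e : S →ₗ[R] R, e 1 = 1 ∧
      Algebra.linearMap R S ∘ₗ e = u • ∑ g : G, (ρ g).toLinearMap := by
  set T : S →ₗ[R] S := u • ∑ g : G, (ρ g).toLinearMap with hT
  have hTapp : ∀ s, T s = u • ∑ g : G, ρ g s := fun s => by simp [hT]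
  have hTmem : ∀ s, T s ∈ LinearMap.range (Algebra.linearMap R S) := by
    intro s
    obtain ⟨r, hr⟩ := hinv (T s) (fun h => by
      rw [hTapp, map_smul, map_sum]
      congr 1
      refine Fintype.sum_equiv (Equiv.mulLeft h) _ _ (fun g => ?_)
      simp [map_mul])
    exact ⟨r, hr⟩
  let E := LinearEquiv.ofInjective (Algebra.linearMap R S) hinj
  let e : S →ₗ[R] R := E.symm.toLinearMap ∘ₗ T.codRestrict _ hTmem
  have he : ∀ s, algebraMap R S (e s) = T s := fun s =>
    congrArg Subtype.val (E.apply_symm_apply ⟨T s, hTmem s⟩)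
  refine ⟨e, hinj ?_, LinearMap.ext he⟩
  rw [he, hTapp, map_one]
  simp only [map_one, Finset.sum_const, Finset.card_univ]
  rw [← Nat.cast_smul_eq_nsmul R, smul_smul, hu, one_smul]

/-- Let `R` be a commutative ring, `G` a finite group whose order is invertible in `R`, and
`S` a commutative `R`-algebra with an action of `G` by `R`-algebra automorphisms such that
`R → S` is injective with image exactly the `G`-invariants of `S`.  Then for every `R`-module
`N`, the map `n ↦ 1 ⊗ n : N → S ⊗[R] N` is injective with image exactly the elements fixed by
the `G`-action through the first tensor factor. -/
theorem tensor_invariants_of_galois_descent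
    (R S : Type*) [CommRing R] [CommRing S] [Algebra R S]
    (G : Type*) [Group G] [Fintype G]
    (hcard : IsUnit ((Fintype.card G : R)))
    (ρ : G →* (S ≃ₐ[R] S))
    (hinj : Function.Injective (algebraMap R S))
    (hinv : ∀ s : S, (∀ g : G, ρ g s = s) → s ∈ (algebraMap R S).range)
    (N : Type*) [AddCommGroup N] [Module R N] :
    Function.Injective (fun n : N => (1 : S) ⊗ₜ[R] n) ∧
      Set.range (fun n : N => (1 : S) ⊗ₜ[R] n) =
        {x : S ⊗[R] N | ∀ g : G, LinearMap.rTensor N ((ρ g).toLinearMap) x = x} := by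
  obtain ⟨u, hu⟩ := hcard.exists_left_inv
  obtain ⟨e, he1, he⟩ := exists_retraction_factoring_average hu ρ hinj hinv
  refine ⟨?_, Set.Subset.antisymm ?_ ?_⟩
  · refine Function.LeftInverse.injective
      (g := fun x => TensorProduct.lid R N (LinearMap.rTensor N e x)) (fun n => ?_)
    simp [he1]
  · rintro _ ⟨n, rfl⟩ g
    simp
  · intro x hx
    have hfix : LinearMap.rTensor N (u • ∑ g : G, (ρ g).toLinearMap) x = x := by
      have hsum : LinearMap.rTensor N (∑ g : G, (ρ g).toLinearMap) x
          = ∑ g : G, LinearMap.rTensor N (ρ g).toLinearMap x := by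
        change LinearMap.rTensorHom N (∑ g : G, (ρ g).toLinearMap) x = _
        rw [map_sum, LinearMap.sum_apply]
        rfl
      rw [LinearMap.rTensor_smul, LinearMap.smul_apply, hsum,
        Finset.sum_congr rfl (fun g _ => hx g), Finset.sum_const, Finset.card_univ,
        ← Nat.cast_smul_eq_nsmul R, smul_smul, hu, one_smul]
    refine ⟨TensorProduct.lid R N (LinearMap.rTensor N e x), ?_⟩
    rw [← he, LinearMap.rTensor_comp, LinearMap.comp_apply] at hfix
    -- Every element of `R ⊗ N` is `1 ⊗ n` for the `n` given by `lid`.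
    have hlid := (TensorProduct.lid R N).symm_apply_apply (LinearMap.rTensor N e x)
    rw [TensorProduct.lid_symm_apply] at hlid
    rw [← hlid] at hfix
    simpa using hfix
end
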